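/- arXiv:1905.07225 — 2 statements merged into one kernel-verified Lean document; each statement's English description precedes it below -/
import Mathlib

section
/- For all η,η' ∈ ℂ and all w,x,y,z ∈ ℤ/3ℤ with y ≠ z, one has M^{wx/yz}[ω^{x−w} + η, ω^{w−x} + η'] = J^x · M^{00/yz}[1 + η, 1 + η']. -/
noncomputable def ω : ℂ := Complex.exp (2 * Real.pi * Complex.I / 3)

def J : Matrix (Fin 3) (Fin 3) ℂ := !![0,1,0; 0,0,1; 1,0,0]

noncomputable def W : Matrix (Fin 3) (Fin 3) ℂ := !![1,1,1; 1,ω,ω^2; 1,ω^2,ω]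

/-- generalized cevian operator `S[η,η'] = W ⬝ diag(1,η',η) ⬝ W⁻¹` -/
noncomputable def S (η η' : ℂ) : Matrix (Fin 3) (Fin 3) ℂ :=
  W * Matrix.diagonal ![1, η', η] * W⁻¹

/-- `ω^k` for `k : ZMod 3` (well defined since `ω^3 = 1`). -/
noncomputable def ωz (k : ZMod 3) : ℂ := ω ^ k.val

/-- `J^k` for `k : ZMod 3` (well defined since `J^3 = 1`). -/
def Jz (k : ZMod 3) : Matrix (Fin 3) (Fin 3) ℂ := J ^ k.val

/-- generalized median operator `M^{wx/yz}[η,η']` -/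
noncomputable def M (η η' : ℂ) (w x y z : ZMod 3) : Matrix (Fin 3) (Fin 3) ℂ :=
  S ((η * ωz (-x) - ωz (-w)) / (ωz (-z) - ωz (-y)))
    ((η' * ωz x - ωz w) / (ωz z - ωz y))

theorem ω_pow_three : ω ^ 3 = 1 := by
  rw [ω, ← Complex.exp_nat_mul, ← Complex.exp_two_pi_mul_I]
  congr 1
  push_cast
  ring

theorem ωz_zero : ωz 0 = 1 := by
  simp [ωz]

theorem ωz_add (a b : ZMod 3) : ωz (a + b) = ωz a * ωz b := by
  rw [ωz, ωz, ωz, ← pow_add, ZMod.val_add, ← pow_eq_pow_mod _ ω_pow_three]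

theorem ωz_neg (a : ZMod 3) : ωz (-a) = ωz a ^ 2 := by
  have h : -a = a + a := by decide +revert
  rw [h, ωz_add, sq]

theorem J_mul_W : J * W = W * Matrix.diagonal ![1, ω, ω ^ 2] := by
  have h := ω_pow_three
  ext i j
  fin_cases i <;> fin_cases j <;>
    simp [J, W, Matrix.mul_apply, Fin.sum_univ_three] <;> grind

theorem J_pow_mul_W (n : ℕ) :
    J ^ n * W = W * Matrix.diagonal ![1, ω ^ n, (ω ^ n) ^ 2] := by
  have hdiag : (![1, ω, ω ^ 2] : Fin 3 → ℂ) ^ n = ![1, ω ^ n, (ω ^ n) ^ 2] := by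
    ext i
    fin_cases i <;> simp [pow_right_comm]
  have h : SemiconjBy W (Matrix.diagonal ![1, ω, ω ^ 2]) J := J_mul_W.symm
  rw [← hdiag, ← Matrix.diagonal_pow]
  exact (h.pow_right n).eq.symm

/-- Multiplying a cevian operator by a power of `J` rescales its two parameters. -/
theorem Jz_mul_S (x : ZMod 3) (η η' : ℂ) :
    Jz x * S η η' = S (ωz (-x) * η) (ωz x * η') := by
  have hdiag : Matrix.diagonal ![1, ωz x, ωz x ^ 2] * Matrix.diagonal ![1, η', η] =
      Matrix.diagonal ![1, ωz x * η', ωz x ^ 2 * η] := by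
    rw [Matrix.diagonal_mul_diagonal]
    congr 1
    ext i
    fin_cases i <;> simp
  have hJ : Jz x * W = W * Matrix.diagonal ![1, ωz x, ωz x ^ 2] := J_pow_mul_W x.val
  rw [S, S, ωz_neg, ← hdiag, ← mul_assoc, ← mul_assoc, ← mul_assoc, hJ]

theorem median_shift_formula (η η' : ℂ) (w x y z : ZMod 3) (hyz : y ≠ z) :
    M (ωz (x - w) + η) (ωz (w - x) + η') w x y z =
      Jz x * M (1 + η) (1 + η') 0 0 y z := by
  have h₀ : ωz (x - w) * ωz (-x) = ωz (-w) := by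
    rw [← ωz_add]
    congr 1
    ring
  have h₁ : ωz (w - x) * ωz x = ωz w := by
    rw [← ωz_add, sub_add_cancel]
  rw [M, M, Jz_mul_S, add_mul, add_mul, h₀, h₁, neg_zero, ωz_zero]
  congr 1 <;> ring
end

section
/- Let s ∈ ℂ with s ≠ −ω and s ≠ −ω², and let Δ ∈ ℂ³ satisfy ψ₁(Δ) ≠ 0 and ψ₂(Δ) ≠ 0. Then C_s(Δ) is reversely similar to H_s(Δ); that is, ψ₁(C_s·Δ) ≠ 0, ψ₁(H_s·Δ) ≠ 0, and ψ(C_s·Δ)³ · ψ(H_s·Δ)³ = 1. -/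
/-- binary Ceva operator `C_s` -/
noncomputable def C (s : ℂ) : Matrix (Fin 3) (Fin 3) ℂ :=
  W * !![1,0,0; 0,0,s+ω; 0,s+ω^2,0] * W⁻¹

/-- Hajja's operator `H_s` -/
noncomputable def H (s : ℂ) : Matrix (Fin 3) (Fin 3) ℂ := S (s+ω) (s+ω^2)

noncomputable def ψ₀ (Δ : Fin 3 → ℂ) : ℂ := (Δ 0 + Δ 1 + Δ 2) / 3
noncomputable def ψ₁ (Δ : Fin 3 → ℂ) : ℂ := (Δ 0 + Δ 1 * ω^2 + Δ 2 * ω) / 3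
noncomputable def ψ₂ (Δ : Fin 3 → ℂ) : ℂ := (Δ 0 + Δ 1 * ω + Δ 2 * ω^2) / 3
noncomputable def ψ (Δ : Fin 3 → ℂ) : ℂ := ψ₂ Δ / ψ₁ Δ

lemma one_add_ω_add_ω_sq : 1 + ω + ω ^ 2 = 0 := by
  have h : IsPrimitiveRoot ω 3 := by
    simpa [ω] using Complex.isPrimitiveRoot_exp 3 (by norm_num)
  simpa [Finset.sum_range_succ] using h.geom_sum_eq_zero (by norm_num)

/-- The inverse of `W` computes the Fourier coefficients. -/
lemma W_inv_mulVec (Δ : Fin 3 → ℂ) : W⁻¹.mulVec Δ = ![ψ₀ Δ, ψ₁ Δ, ψ₂ Δ] := by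
  have hω := one_add_ω_add_ω_sq
  have hinv : W⁻¹ = (1 / 3 : ℂ) • !![1, 1, 1; 1, ω ^ 2, ω; 1, ω, ω ^ 2] := by
    apply Matrix.inv_eq_right_inv
    ext i j
    fin_cases i <;> fin_cases j <;>
      simp [W, Matrix.mul_apply, Fin.sum_univ_three] <;> grind
  rw [hinv]
  ext i
  fin_cases i <;>
    simp [Matrix.mulVec, dotProduct, Fin.sum_univ_three, ψ₀, ψ₁, ψ₂] <;> ring

lemma ψ₁_W_mulVec (v : Fin 3 → ℂ) : ψ₁ (W.mulVec v) = v 1 := by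
  have hω := one_add_ω_add_ω_sq
  simp [ψ₁, W, Matrix.mulVec, dotProduct, Fin.sum_univ_three]
  grind

lemma ψ₂_W_mulVec (v : Fin 3 → ℂ) : ψ₂ (W.mulVec v) = v 2 := by
  have hω := one_add_ω_add_ω_sq
  simp [ψ₂, W, Matrix.mulVec, dotProduct, Fin.sum_univ_three]
  grind

lemma ψ₁_C_mulVec (s : ℂ) (Δ : Fin 3 → ℂ) :
    ψ₁ ((C s).mulVec Δ) = (s + ω) * ψ₂ Δ := by
  rw [C, ← Matrix.mulVec_mulVec, ← Matrix.mulVec_mulVec, ψ₁_W_mulVec, W_inv_mulVec]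
  simp [Matrix.mulVec, dotProduct, Fin.sum_univ_three]

lemma ψ₂_C_mulVec (s : ℂ) (Δ : Fin 3 → ℂ) :
    ψ₂ ((C s).mulVec Δ) = (s + ω ^ 2) * ψ₁ Δ := by
  rw [C, ← Matrix.mulVec_mulVec, ← Matrix.mulVec_mulVec, ψ₂_W_mulVec, W_inv_mulVec]
  simp [Matrix.mulVec, dotProduct, Fin.sum_univ_three]

lemma ψ₁_S_mulVec (η η' : ℂ) (Δ : Fin 3 → ℂ) :
    ψ₁ ((S η η').mulVec Δ) = η' * ψ₁ Δ := by
  rw [S, ← Matrix.mulVec_mulVec, ← Matrix.mulVec_mulVec, ψ₁_W_mulVec, W_inv_mulVec]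
  simp [Matrix.mulVec_diagonal]

lemma ψ₂_S_mulVec (η η' : ℂ) (Δ : Fin 3 → ℂ) :
    ψ₂ ((S η η').mulVec Δ) = η * ψ₂ Δ := by
  rw [S, ← Matrix.mulVec_mulVec, ← Matrix.mulVec_mulVec, ψ₂_W_mulVec, W_inv_mulVec]
  simp [Matrix.mulVec_diagonal]

theorem ceva_reversely_similar_hajja (s : ℂ) (hs1 : s ≠ -ω) (hs2 : s ≠ -ω ^ 2)
    (Δ : Fin 3 → ℂ) (h1 : ψ₁ Δ ≠ 0) (h2 : ψ₂ Δ ≠ 0) :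
    ψ₁ ((C s).mulVec Δ) ≠ 0 ∧ ψ₁ ((H s).mulVec Δ) ≠ 0 ∧
    (ψ ((C s).mulVec Δ)) ^ 3 * (ψ ((H s).mulVec Δ)) ^ 3 = 1 := by
  have hη : s + ω ≠ 0 := fun h => hs1 (eq_neg_of_add_eq_zero_left h)
  have hη' : s + ω ^ 2 ≠ 0 := fun h => hs2 (eq_neg_of_add_eq_zero_left h)
  simp only [ψ, H, ψ₁_C_mulVec, ψ₂_C_mulVec, ψ₁_S_mulVec, ψ₂_S_mulVec]
  refine ⟨mul_ne_zero hη h2, mul_ne_zero hη' h1, ?_⟩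
  field_simp
end
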